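/- arXiv:1201.1358 — 2 statements merged into one kernel-verified Lean document; each statement's English description precedes it below -/
import Mathlib

section
/- Let p̃ : 𝔻 → ℂ be holomorphic with Re p̃(z) ≥ 0 for all z ∈ 𝔻. The following are equivalent: (i) for every z ∈ 𝔻 there exists a differentiable function x : ℝ → 𝔻 with x(0) = z and x'(t) = (1 − x(t))² p̃(x(t)) for all t ∈ ℝ (completeness of the vector field (1−z)² p̃(z) in 𝔻); (ii) there exist A ≥ 0 and B ∈ ℝ such that p̃(z) = A(1+z)/(1−z) + iB for all z ∈ 𝔻. -/
open Complex Metric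

open Set Filter Topology ComplexConjugate

/-!
Conjugating by the Cayley transform `z ↦ (1 + z) / (1 - z)` turns `(1 - z)² p z` into the field
`P w = 2 p z` on the right half-plane, where `Re P ≥ 0`, and the claim becomes: `P` is complete iff
`P w = A w + i B`. If `Re P` vanishes somewhere, `P` is constant. Otherwise a primitive `h` of
`1 / P` is injective (Noshiro–Warschawski), and trajectories satisfy `h (y t) = h (y 0) + t`, so
that the time-`t` map is holomorphic with derivative `P (y t) / P (y 0)` at `y 0`. By Schwarz–Pick
the hyperbolic speed `‖P (y t)‖ / Re (y t)` is at most its value at `t = 0` for *all* real `t`;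
having a maximum there, its derivative vanishes, i.e. `Re w * Re P' w = Re P w`. Schwarz–Pick for
`P` itself, `Re w * ‖P' w‖ ≤ Re P w`, then makes `P'` real, hence constant.
-/

section VectorField

variable {E F : Type*} [NormedAddCommGroup E] [NormedSpace ℝ E] [NormedAddCommGroup F]
  [NormedSpace ℝ F]

/-- The autonomous vector field `f` is complete on `U`: through every point of `U` there passes an
integral curve that is defined for all real times and stays in `U`. -/
def IsCompleteVectorFieldOn (f : E → E) (U : Set E) : Prop :=
  ∀ z ∈ U, ∃ x : ℝ → E, (∀ t, x t ∈ U) ∧ x 0 = z ∧ IsIntegralCurve x fun _ ↦ f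

namespace IsCompleteVectorFieldOn

theorem of_semiconj {f : E → E} {g : F → F} {U : Set E} {V : Set F} {φ : E → F}
    {φ' : E → E →L[ℝ] F} (hf : IsCompleteVectorFieldOn f U) (hmaps : MapsTo φ U V)
    (hsurj : SurjOn φ U V) (hφ : ∀ z ∈ U, HasFDerivAt φ (φ' z) z)
    (hsemi : ∀ z ∈ U, φ' z (f z) = g (φ z)) : IsCompleteVectorFieldOn g V := by
  intro w hw
  obtain ⟨z, hz, rfl⟩ := hsurj hw
  obtain ⟨x, hxU, rfl, hx⟩ := hf z hz
  refine ⟨φ ∘ x, fun t ↦ hmaps (hxU t), rfl, fun t ↦ ?_⟩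
  exact ((hφ _ (hxU t)).comp_hasDerivAt t (hx t)).congr_deriv (hsemi _ (hxU t))

theorem congr {f g : E → E} {U : Set E} (hf : IsCompleteVectorFieldOn f U) (hfg : EqOn f g U) :
    IsCompleteVectorFieldOn g U :=
  hf.of_semiconj (mapsTo_id U) (surjOn_id U) (fun z _ ↦ hasFDerivAt_id z) hfg

end IsCompleteVectorFieldOn

end VectorField

section HolomorphicFunctions

variable {U : Set ℂ}

theorem re_pos_or_eq_const_mul_I_of_re_nonneg {f : ℂ → ℂ} (hU : IsOpen U) (hUc : IsPreconnected U)
    (hf : DifferentiableOn ℂ f U) (hre : ∀ z ∈ U, 0 ≤ (f z).re) :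
    (∀ z ∈ U, 0 < (f z).re) ∨ ∃ B : ℝ, ∀ z ∈ U, f z = B * I := by
  by_cases hpos : ∀ z ∈ U, 0 < (f z).re
  · exact .inl hpos
  push Not at hpos
  obtain ⟨z₀, hz₀, hle⟩ := hpos
  have hz₀_re : (f z₀).re = 0 := hle.antisymm (hre z₀ hz₀)
  rcases (hf.analyticOnNhd hU).is_constant_or_isOpen hUc with ⟨c, hc⟩ | hopen
  · have hc_re : c.re = 0 := hc z₀ hz₀ ▸ hz₀_re
    exact .inr ⟨c.im, fun z hz ↦ by rw [hc z hz]; apply Complex.ext <;> simp [hc_re]⟩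
  · have himage_open : IsOpen (re '' (f '' U)) := isOpenMap_re _ (hopen U subset_rfl hU)
    have himage_nonneg : re '' (f '' U) ⊆ Ici 0 := by
      rintro _ ⟨_, ⟨z, hz, rfl⟩, rfl⟩
      exact hre z hz
    have himage_pos : re '' (f '' U) ⊆ Ioi 0 :=
      interior_Ici (a := (0 : ℝ)) ▸ interior_maximal himage_nonneg himage_open
    exact absurd hz₀_re (himage_pos ⟨_, ⟨z₀, hz₀, rfl⟩, rfl⟩).ne'

/-- The **Noshiro–Warschawski theorem**. -/
theorem injOn_of_convex_of_re_deriv_pos {h h' : ℂ → ℂ} (hU : Convex ℝ U)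
    (hd : ∀ z ∈ U, HasDerivAt h (h' z) z) (hpos : ∀ z ∈ U, 0 < (h' z).re) : InjOn h U := by
  intro a ha b hb hab
  by_contra hne
  have hsub : b - a ≠ 0 := sub_ne_zero.2 (Ne.symm hne)
  have hF : ∀ z ∈ U, HasFDerivWithinAt (fun z ↦ (h z / (b - a)).re)
      (reCLM ∘L ((h' z / (b - a)) • (1 : ℂ →L[ℝ] ℂ))) U z := fun z hz ↦
    (reCLM.hasFDerivAt.comp z
      ((hd z hz).div_const (b - a)).complexToReal_fderiv).hasFDerivWithinAt
  obtain ⟨z, hz, hmvt⟩ := domain_mvt hF hU ha hb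
  have hre_zero : (h' z).re = 0 := by
    simpa [hab, div_mul_cancel₀ _ hsub] using hmvt.symm
  exact (hpos z (hU.segment_subset ha hb hz)).ne' hre_zero

theorem hasDerivAt_of_injOn_comp {h φ : ℂ → ℂ} {h' c w : ℂ} (hU : IsOpen U)
    (hd : DifferentiableOn ℂ h U) (hinj : InjOn h U) (hφU : ∀ᶠ x in 𝓝 w, φ x ∈ U)
    (hh : HasDerivAt h h' (φ w)) (hh' : h' ≠ 0) (hcomp : HasDerivAt (h ∘ φ) c w) :
    HasDerivAt φ (c / h') w := by
  have hnhds : U ∈ 𝓝 (φ w) := hU.mem_nhds hφU.self_of_nhds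
  have hstrict : HasStrictDerivAt h h' (φ w) :=
    hh.deriv ▸ (hd.analyticAt hnhds).contDiffAt.hasStrictDerivAt one_ne_zero
  have hleft : ∀ᶠ x in 𝓝 (φ w), Function.invFunOn h U (h x) = x :=
    eventually_of_mem hnhds hinj.leftInvOn_invFunOn
  have hinv := (hstrict.to_local_left_inverse hh' hleft).hasDerivAt
  refine ((hinv.comp w hcomp).congr_of_eventuallyEq ?_).congr_deriv (inv_mul_eq_div h' c)
  filter_upwards [hφU] with x hx
  exact (hinj.leftInvOn_invFunOn hx).symm

theorem apply_integralCurve_eq_add_of_hasDerivAt_inv {P h : ℂ → ℂ} {y : ℝ → ℂ}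
    (hP : ∀ z ∈ U, P z ≠ 0) (hh : ∀ z ∈ U, HasDerivAt h (P z)⁻¹ z) (hyU : ∀ t, y t ∈ U)
    (hy : IsIntegralCurve y fun _ ↦ P) (t : ℝ) : h (y t) = h (y 0) + t := by
  have hd : ∀ s : ℝ, HasDerivAt (fun s : ℝ ↦ h (y s) - s) 0 s := fun s ↦
    (((hh _ (hyU s)).comp s (hy s)).sub ofRealCLM.hasDerivAt).congr_deriv (by
      simp [inv_mul_cancel₀ (hP _ (hyU s))])
  have hconst := is_const_of_deriv_eq_zero (fun s ↦ (hd s).differentiableAt)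
    (fun s ↦ (hd s).deriv) t 0
  simp only [ofReal_zero, sub_zero] at hconst
  linear_combination hconst

end HolomorphicFunctions

/-- The domain `{w | 0 < Re w}`, the image of the unit disk under the Cayley transform. -/
def rightHalfPlane : Set ℂ := {w | 0 < w.re}

theorem isOpen_rightHalfPlane : IsOpen rightHalfPlane := isOpen_re_gt 0

theorem convex_rightHalfPlane : Convex ℝ rightHalfPlane := convex_halfSpace_re_gt 0

theorem one_mem_rightHalfPlane : 1 ∈ rightHalfPlane := one_pos.trans_eq one_re.symm

theorem isConnected_rightHalfPlane : IsConnected rightHalfPlane :=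
  ⟨⟨1, one_mem_rightHalfPlane⟩, convex_rightHalfPlane.isPreconnected⟩

section Cayley

/-- The Cayley transform of the right half-plane onto the unit disk that sends `a` to `0` and `∞`
to `1`. -/
noncomputable def cayley (a w : ℂ) : ℂ := (w - a) / (w + conj a)

/-- The inverse of `cayley a`; for `a = 1` it is `z ↦ (1 + z) / (1 - z)`. -/
noncomputable def cayleySymm (a z : ℂ) : ℂ := (a + conj a * z) / (1 - z)

variable {a w z : ℂ}

theorem add_conj_ne_zero (ha : a ∈ rightHalfPlane) (hw : w ∈ rightHalfPlane) : w + conj a ≠ 0 := by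
  have hre : 0 < (w + conj a).re := by simpa using add_pos hw ha
  exact fun h ↦ hre.ne' (by simp [h])

theorem one_sub_ne_zero_of_mem_ball (hz : z ∈ ball (0 : ℂ) 1) : 1 - z ≠ 0 := by
  rintro h
  simp [← sub_eq_zero.1 h] at hz

theorem cayley_self (a : ℂ) : cayley a a = 0 := by simp [cayley]

theorem cayleySymm_zero (a : ℂ) : cayleySymm a 0 = a := by simp [cayleySymm]

theorem one_sub_cayley (ha : a ∈ rightHalfPlane) (hw : w ∈ rightHalfPlane) :
    1 - cayley a w = (a + conj a) / (w + conj a) := by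
  rw [cayley, one_sub_div (add_conj_ne_zero ha hw)]
  ring

theorem mapsTo_cayley (ha : a ∈ rightHalfPlane) :
    MapsTo (cayley a) rightHalfPlane (ball 0 1) := by
  intro w hw
  have hne := add_conj_ne_zero ha hw
  rw [mem_ball_zero_iff, cayley, norm_div, div_lt_one (norm_pos_iff.2 hne),
    ← sq_lt_sq₀ (norm_nonneg _) (norm_nonneg _), Complex.sq_norm, Complex.sq_norm,
    normSq_apply, normSq_apply]
  simp only [sub_re, sub_im, add_re, add_im, conj_re, conj_im]
  linarith [mul_pos ha.out hw.out]

theorem mapsTo_cayleySymm (ha : a ∈ rightHalfPlane) :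
    MapsTo (cayleySymm a) (ball 0 1) rightHalfPlane := by
  intro z hz
  have hre : (cayleySymm a z).re = a.re * (1 - normSq z) / normSq (1 - z) := by
    rw [cayleySymm, div_re, ← add_div]
    simp only [normSq_apply, add_re, add_im, sub_re, sub_im, mul_re, mul_im, conj_re, conj_im,
      one_re, one_im]
    ring
  have hz_normSq : normSq z < 1 := by
    rw [normSq_eq_norm_sq]
    exact pow_lt_one₀ (norm_nonneg z) (mem_ball_zero_iff.1 hz) two_ne_zero
  change 0 < (cayleySymm a z).re
  rw [hre]
  exact div_pos (mul_pos ha (sub_pos.2 hz_normSq))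
    (normSq_pos.2 (one_sub_ne_zero_of_mem_ball hz))

theorem cayleySymm_cayley (ha : a ∈ rightHalfPlane) (hw : w ∈ rightHalfPlane) :
    cayleySymm a (cayley a w) = w := by
  have hw_ne := add_conj_ne_zero ha hw
  have ha_ne := add_conj_ne_zero ha ha
  rw [cayleySymm, one_sub_cayley ha hw, cayley]
  field_simp
  ring

theorem cayley_cayleySymm (ha : a ∈ rightHalfPlane) (hz : z ∈ ball (0 : ℂ) 1) :
    cayley a (cayleySymm a z) = z := by
  have hz_ne := one_sub_ne_zero_of_mem_ball hz
  rw [cayley, div_eq_iff (add_conj_ne_zero ha (mapsTo_cayleySymm ha hz)), cayleySymm]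
  field_simp
  ring

theorem hasDerivAt_cayley (ha : a ∈ rightHalfPlane) (hw : w ∈ rightHalfPlane) :
    HasDerivAt (cayley a) ((a + conj a) / (w + conj a) ^ 2) w := by
  refine (((hasDerivAt_id w).sub_const a).div ((hasDerivAt_id w).add_const (conj a))
    (add_conj_ne_zero ha hw)).congr_deriv ?_
  simp only [id_eq]
  ring

theorem hasDerivAt_cayleySymm (a : ℂ) (hz : z ∈ ball (0 : ℂ) 1) :
    HasDerivAt (cayleySymm a) ((a + conj a) / (1 - z) ^ 2) z := by
  refine ((((hasDerivAt_id z).const_mul (conj a)).const_add a).div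
    ((hasDerivAt_id z).const_sub 1) (one_sub_ne_zero_of_mem_ball hz)).congr_deriv ?_
  simp only [id_eq]
  ring

theorem isCompleteVectorFieldOn_ball_iff_rightHalfPlane {p : ℂ → ℂ} (ha : a ∈ rightHalfPlane) :
    IsCompleteVectorFieldOn (fun z ↦ (1 - z) ^ 2 * p z) (ball 0 1) ↔
      IsCompleteVectorFieldOn (fun w ↦ (a + conj a) * p (cayley a w)) rightHalfPlane := by
  constructor <;> intro hc
  · refine hc.of_semiconj (mapsTo_cayleySymm ha)
      (fun w hw ↦ ⟨_, mapsTo_cayley ha hw, cayleySymm_cayley ha hw⟩)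
      (fun z hz ↦ (hasDerivAt_cayleySymm a hz).complexToReal_fderiv) fun z hz ↦ ?_
    have hz_ne := one_sub_ne_zero_of_mem_ball hz
    simp only [cayley_cayleySymm ha hz, smul_apply, one_apply_eq_self, smul_eq_mul]
    field_simp
  · refine hc.of_semiconj (mapsTo_cayley ha)
      (fun z hz ↦ ⟨_, mapsTo_cayleySymm ha hz, cayley_cayleySymm ha hz⟩)
      (fun w hw ↦ (hasDerivAt_cayley ha hw).complexToReal_fderiv) fun w hw ↦ ?_
    simp only [one_sub_cayley ha hw, smul_apply, one_apply_eq_self, smul_eq_mul]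
    field_simp

theorem exists_comp_cayley_eq_mul_add_iff {p : ℂ → ℂ} :
    (∃ A B : ℝ, 0 ≤ A ∧ ∀ w ∈ rightHalfPlane, (1 + conj 1) * p (cayley 1 w) = A * w + B * I) ↔
      ∃ A B : ℝ, 0 ≤ A ∧ ∀ z ∈ ball (0 : ℂ) 1, p z = A * (1 + z) / (1 - z) + I * B := by
  have h1 := one_mem_rightHalfPlane
  constructor <;> rintro ⟨A, B, hA, hAB⟩
  · refine ⟨A / 2, B / 2, by positivity, fun z hz ↦ ?_⟩
    have hz_eq := hAB _ (mapsTo_cayleySymm h1 hz)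
    rw [cayley_cayleySymm h1 hz] at hz_eq
    simp only [cayleySymm, map_one] at hz_eq
    push_cast
    linear_combination hz_eq / 2
  · refine ⟨2 * A, 2 * B, by positivity, fun w hw ↦ ?_⟩
    have hw_eq := cayleySymm_cayley h1 hw
    simp only [cayleySymm, map_one] at hw_eq
    rw [hAB _ (mapsTo_cayley h1 hw), map_one]
    push_cast
    linear_combination 2 * A * hw_eq

end Cayley

section RightHalfPlane

/-- The infinitesimal **Schwarz–Pick lemma**. -/
theorem norm_deriv_mul_re_le_re {f : ℂ → ℂ} (hf : DifferentiableOn ℂ f rightHalfPlane)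
    (hmaps : MapsTo f rightHalfPlane rightHalfPlane) {a : ℂ} (ha : a ∈ rightHalfPlane) :
    ‖deriv f a‖ * a.re ≤ (f a).re := by
  set b := f a with hb_def
  have hb : b ∈ rightHalfPlane := hmaps ha
  have hdf : ∀ w ∈ rightHalfPlane, HasDerivAt f (deriv f w) w := fun w hw ↦
    (hf.differentiableAt (isOpen_rightHalfPlane.mem_nhds hw)).hasDerivAt
  let g : ℂ → ℂ := cayley b ∘ f ∘ cayleySymm a
  have hg : ∀ z ∈ ball (0 : ℂ) 1, HasDerivAt g _ z := fun z hz ↦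
    have hw := mapsTo_cayleySymm ha hz
    (hasDerivAt_cayley hb (hmaps hw)).comp z ((hdf _ hw).comp z (hasDerivAt_cayleySymm a hz))
  have hg_zero : g 0 = 0 := by simp [g, cayleySymm_zero, ← hb_def, cayley_self]
  have hg_maps : MapsTo g (ball 0 1) (closedBall (g 0) 1) := by
    rw [hg_zero]
    exact ((mapsTo_cayley hb).comp (hmaps.comp (mapsTo_cayleySymm ha))).mono_right
      ball_subset_closedBall
  have hschwarz : ‖deriv g 0‖ ≤ 1 := norm_deriv_le_one_of_mapsTo_ball
    (fun z hz ↦ (hg z hz).differentiableAt.differentiableWithinAt) hg_maps one_pos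
  have hg_deriv : deriv g 0 = deriv f a * a.re / b.re := by
    have hb_re : (b.re : ℂ) ≠ 0 := ofReal_ne_zero.2 hb.out.ne'
    rw [(hg 0 (mem_ball_self one_pos)).deriv, cayleySymm_zero, ← hb_def, add_conj, add_conj]
    push_cast
    field_simp
    simp
  rwa [hg_deriv, norm_div, norm_mul, norm_real, norm_real, Real.norm_of_nonneg ha.out.le,
    Real.norm_of_nonneg hb.out.le, div_le_one hb.out] at hschwarz

variable {P : ℂ → ℂ}

theorem exists_injOn_hasDerivAt_inv (hP : DifferentiableOn ℂ P rightHalfPlane)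
    (hmaps : MapsTo P rightHalfPlane rightHalfPlane) :
    ∃ h : ℂ → ℂ, InjOn h rightHalfPlane ∧ ∀ w ∈ rightHalfPlane, HasDerivAt h (P w)⁻¹ w := by
  have hP_ne : ∀ w ∈ rightHalfPlane, P w ≠ 0 := fun w hw ↦ ne_zero_of_re_pos (hmaps hw)
  obtain ⟨h, hh⟩ := convex_rightHalfPlane.exists_forall_hasDerivWithinAt (hP.inv hP_ne)
  replace hh := fun w hw ↦ (hh w hw).hasDerivAt (isOpen_rightHalfPlane.mem_nhds hw)
  refine ⟨h, injOn_of_convex_of_re_deriv_pos convex_rightHalfPlane hh fun w hw ↦ ?_, hh⟩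
  rw [Pi.inv_apply, inv_re]
  exact div_pos (hmaps hw) (normSq_pos.2 (hP_ne w hw))

namespace IsCompleteVectorFieldOn

/-- In other words, the hyperbolic speed `‖P (y t)‖ / Re (y t)` is maximal at `t = 0`. -/
theorem norm_mul_re_le (hc : IsCompleteVectorFieldOn P rightHalfPlane)
    (hP : DifferentiableOn ℂ P rightHalfPlane) (hmaps : MapsTo P rightHalfPlane rightHalfPlane)
    {y : ℝ → ℂ} (hyH : ∀ t, y t ∈ rightHalfPlane) (hy : IsIntegralCurve y fun _ ↦ P) (t : ℝ) :
    ‖P (y t)‖ * (y 0).re ≤ ‖P (y 0)‖ * (y t).re := by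
  have hP_ne : ∀ w ∈ rightHalfPlane, P w ≠ 0 := fun w hw ↦ ne_zero_of_re_pos (hmaps hw)
  obtain ⟨h, hinj, hh⟩ := exists_injOn_hasDerivAt_inv hP hmaps
  choose! x hxH hx0 hx using hc
  let φ : ℂ → ℂ := fun w ↦ x w t
  have hφH : MapsTo φ rightHalfPlane rightHalfPlane := fun w hw ↦ hxH w hw t
  have hφ : ∀ w ∈ rightHalfPlane, h (φ w) = h w + t := fun w hw ↦ by
    simpa only [hx0 w hw] using
      apply_integralCurve_eq_add_of_hasDerivAt_inv hP_ne hh (hxH w hw) (hx w hw) t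
  have hφy : φ (y 0) = y t := hinj (hφH (hyH 0)) (hyH t) <| by
    rw [hφ _ (hyH 0), apply_integralCurve_eq_add_of_hasDerivAt_inv hP_ne hh hyH hy t]
  have hφ_deriv : ∀ w ∈ rightHalfPlane, HasDerivAt φ ((P w)⁻¹ / (P (φ w))⁻¹) w := by
    intro w hw
    have hnhds := isOpen_rightHalfPlane.mem_nhds hw
    refine hasDerivAt_of_injOn_comp isOpen_rightHalfPlane
      (fun z hz ↦ (hh z hz).differentiableAt.differentiableWithinAt) hinj
      (eventually_of_mem hnhds hφH) (hh _ (hφH hw)) (inv_ne_zero (hP_ne _ (hφH hw))) ?_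
    exact ((hh w hw).add_const (t : ℂ)).congr_of_eventuallyEq (eventually_of_mem hnhds hφ)
  have hpick := norm_deriv_mul_re_le_re
    (fun w hw ↦ (hφ_deriv w hw).differentiableAt.differentiableWithinAt) hφH (hyH 0)
  rwa [(hφ_deriv _ (hyH 0)).deriv, hφy, inv_div_inv, norm_div, div_mul_eq_mul_div,
    div_le_iff₀' (norm_pos_iff.2 (hP_ne _ (hyH 0)))] at hpick

theorem re_mul_re_deriv_eq (hc : IsCompleteVectorFieldOn P rightHalfPlane)
    (hP : DifferentiableOn ℂ P rightHalfPlane) (hmaps : MapsTo P rightHalfPlane rightHalfPlane)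
    {a : ℂ} (ha : a ∈ rightHalfPlane) : a.re * (deriv P a).re = (P a).re := by
  obtain ⟨y, hyH, rfl, hy⟩ := hc a ha
  set a := y 0 with ha_def
  let K : ℝ → ℝ := fun t ↦ ‖P (y t)‖ ^ 2 * a.re ^ 2 - ‖P a‖ ^ 2 * (y t).re ^ 2
  have hK_zero : K 0 = 0 := sub_self _
  have hK_le : ∀ t, K t ≤ K 0 := fun t ↦ by
    have hspeed := pow_le_pow_left₀ (mul_nonneg (norm_nonneg _) ha.out.le)
      (hc.norm_mul_re_le hP hmaps hyH hy t) 2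
    rw [mul_pow, mul_pow] at hspeed
    rw [hK_zero]
    exact sub_nonpos.2 hspeed
  have hPa : HasDerivAt P (deriv P a) a :=
    (hP.differentiableAt (isOpen_rightHalfPlane.mem_nhds ha)).hasDerivAt
  have hK_deriv := (((hPa.comp 0 (hy 0)).norm_sq).mul_const (a.re ^ 2)).sub
    (((reCLM.hasFDerivAt.comp_hasDerivAt 0 (hy 0)).pow 2).const_mul (‖P a‖ ^ 2))
  have hcritical :=
    IsLocalMax.hasDerivAt_eq_zero (f := K) (Eventually.of_forall hK_le) hK_deriv
  have hinner : inner ℝ (P a) (deriv P a * P a) = (deriv P a).re * ‖P a‖ ^ 2 := by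
    rw [Complex.inner, mul_assoc, mul_conj', ← ofReal_pow, re_mul_ofReal]
  have hPa_ne : P a ≠ 0 := ne_zero_of_re_pos (hmaps ha)
  have hfactor : 2 * ‖P a‖ ^ 2 * a.re ≠ 0 := by
    have := ha.out
    positivity
  simp only [Function.comp_apply, ← ha_def, hinner, reCLM_apply] at hcritical
  refine mul_left_cancel₀ hfactor ?_
  linear_combination hcritical

end IsCompleteVectorFieldOn

theorem exists_eq_mul_add_of_re_mul_re_deriv_eq (hP : DifferentiableOn ℂ P rightHalfPlane)
    (hmaps : MapsTo P rightHalfPlane rightHalfPlane)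
    (hre : ∀ w ∈ rightHalfPlane, w.re * (deriv P w).re = (P w).re) :
    ∃ A B : ℝ, 0 ≤ A ∧ ∀ w ∈ rightHalfPlane, P w = A * w + B * I := by
  have hnorm_le : ∀ w ∈ rightHalfPlane, ‖deriv P w‖ ≤ (deriv P w).re := fun w hw ↦ by
    refine le_of_mul_le_mul_right ?_ hw.out
    rw [mul_comm (deriv P w).re, hre w hw]
    exact norm_deriv_mul_re_le_re hP hmaps hw
  have him : ∀ w ∈ rightHalfPlane, (deriv P w).im = 0 := fun w hw ↦
    abs_re_eq_norm.1 ((abs_re_le_norm _).antisymm ((hnorm_le w hw).trans (le_abs_self _)))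
  obtain ⟨A, hA⟩ := ((hP.deriv isOpen_rightHalfPlane).analyticOnNhd
    isOpen_rightHalfPlane).eq_const_add_im_mul_I_of_re_eq_const him isOpen_rightHalfPlane
    isConnected_rightHalfPlane
  replace hA : ∀ w ∈ rightHalfPlane, deriv P w = A := by simpa using hA
  obtain ⟨c, hc⟩ := isOpen_rightHalfPlane.exists_is_const_of_deriv_eq_zero
    isConnected_rightHalfPlane.isPreconnected (f := fun w ↦ P w - A * w)
    (hP.sub (by fun_prop)) fun w hw ↦ by
      have hPw := (hP.differentiableAt (isOpen_rightHalfPlane.mem_nhds hw)).hasDerivAt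
      have hsub : HasDerivAt (fun w ↦ P w - A * w) 0 w :=
        (hPw.sub ((hasDerivAt_id w).const_mul (A : ℂ))).congr_deriv (by simp [hA w hw])
      exact hsub.deriv
  obtain ⟨w₀, hw₀⟩ := isConnected_rightHalfPlane.nonempty
  have hA_nonneg : 0 ≤ A := by
    simpa [hA w₀ hw₀] using (norm_nonneg _).trans (hnorm_le w₀ hw₀)
  have hc_re : c.re = 0 := by
    have hw₀_re := hre w₀ hw₀
    rw [hA w₀ hw₀, ofReal_re] at hw₀_re
    rw [← hc w₀ hw₀, sub_re, re_ofReal_mul, ← hw₀_re, mul_comm, sub_self]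
  refine ⟨A, c.im, hA_nonneg, fun w hw ↦ ?_⟩
  rw [← sub_eq_iff_eq_add', hc w hw]
  apply Complex.ext <;> simp [hc_re]

theorem exists_isIntegralCurve_mul_add (A B : ℝ) :
    ∃ c : ℝ → ℝ, c 0 = 0 ∧ IsIntegralCurve c fun _ s ↦ A * s + B := by
  rcases eq_or_ne A 0 with rfl | hA
  · exact ⟨fun t ↦ t * B, zero_mul B, fun t ↦ by simpa using (hasDerivAt_id t).mul_const B⟩
  · refine ⟨fun t ↦ (Real.exp (A * t) - 1) * (B / A), by simp, fun t ↦ ?_⟩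
    refine (((((hasDerivAt_id t).const_mul A).exp).sub_const 1).mul_const (B / A)).congr_deriv ?_
    simp only [id_eq]
    field_simp
    ring

theorem isCompleteVectorFieldOn_mul_add (A B : ℝ) :
    IsCompleteVectorFieldOn (fun w : ℂ ↦ A * w + B * I) rightHalfPlane := by
  intro w hw
  obtain ⟨c, hc_zero, hc⟩ := exists_isIntegralCurve_mul_add A B
  refine ⟨fun t ↦ Real.exp (A * t) * w + c t * I, fun t ↦ ?_, by simp [hc_zero], fun t ↦ ?_⟩
  · have hre : 0 < Real.exp (A * t) * w.re := mul_pos (Real.exp_pos _) hw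
    simpa [rightHalfPlane, -ofReal_exp, -ofReal_mul] using hre
  · refine ((((hasDerivAt_id t).const_mul A).exp.ofReal_comp.mul_const w).add
      ((hc t).ofReal_comp.mul_const I)).congr_deriv ?_
    simp only [id_eq]
    push_cast
    ring

theorem isCompleteVectorFieldOn_rightHalfPlane_iff (hP : DifferentiableOn ℂ P rightHalfPlane)
    (hre : ∀ w ∈ rightHalfPlane, 0 ≤ (P w).re) :
    IsCompleteVectorFieldOn P rightHalfPlane ↔
      ∃ A B : ℝ, 0 ≤ A ∧ ∀ w ∈ rightHalfPlane, P w = A * w + B * I := by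
  constructor
  · intro hc
    rcases re_pos_or_eq_const_mul_I_of_re_nonneg isOpen_rightHalfPlane
      isConnected_rightHalfPlane.isPreconnected hP hre with hmaps | ⟨B, hB⟩
    · exact exists_eq_mul_add_of_re_mul_re_deriv_eq hP hmaps fun _ ↦
        hc.re_mul_re_deriv_eq hP hmaps
    · exact ⟨0, B, le_rfl, by simpa using hB⟩
  · rintro ⟨A, B, -, hAB⟩
    exact (isCompleteVectorFieldOn_mul_add A B).congr fun w hw ↦ (hAB w hw).symm

end RightHalfPlane

/-- the vector field `(1-z)² p̃(z)` is complete in the unit disk if and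
only if the Herglotz function `p̃` is of the automorphism type
`p̃(z) = A (1+z)/(1-z) + iB` with `A ≥ 0`, `B ∈ ℝ`. -/
theorem stmt_4 (p : ℂ → ℂ)
    (hol : DifferentiableOn ℂ p (ball (0 : ℂ) 1))
    (hre : ∀ z ∈ ball (0 : ℂ) 1, 0 ≤ (p z).re) :
    (∀ z ∈ ball (0 : ℂ) 1, ∃ x : ℝ → ℂ,
      (∀ t : ℝ, x t ∈ ball (0 : ℂ) 1) ∧ x 0 = z ∧
      (∀ t : ℝ, HasDerivAt x ((1 - x t) ^ 2 * p (x t)) t))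
    ↔ (∃ A B : ℝ, 0 ≤ A ∧ ∀ z ∈ ball (0 : ℂ) 1,
        p z = (A : ℂ) * (1 + z) / (1 - z) + Complex.I * B) := by
  have h1 := one_mem_rightHalfPlane
  have hP : DifferentiableOn ℂ (fun w ↦ (1 + conj 1) * p (cayley 1 w)) rightHalfPlane :=
    (hol.comp (fun w hw ↦ (hasDerivAt_cayley h1 hw).differentiableAt.differentiableWithinAt)
      (mapsTo_cayley h1)).const_mul _
  have hPre : ∀ w ∈ rightHalfPlane, 0 ≤ ((1 + conj 1) * p (cayley 1 w)).re := fun w hw ↦ by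
    simpa [one_add_one_eq_two] using hre _ (mapsTo_cayley h1 hw)
  exact (isCompleteVectorFieldOn_ball_iff_rightHalfPlane h1).trans <|
    (isCompleteVectorFieldOn_rightHalfPlane_iff hP hPre).trans exists_comp_cayley_eq_mul_add_iff
end

section
/- Let A ≥ 0, B ∈ ℝ, and k ∈ ℝ with k ≠ 0 satisfy k < 2(−B − √(A² + B²)) or k > 2(−B + √(A² + B²)), so that D := 4A² − 4Bk − k² < 0 (elliptic case). Let z ∈ 𝔻 be a point that is not a zero of the vector field g(w) = (w − 1)²(A(1+w)/(1−w) + iB) − ikw, and let ψ : [0,∞) → 𝔻 be the solution of ψ'(t) = g(ψ(t)), ψ(0) = z. Define φ(t) = e^{ikt} ψ(t). Then there exists t₀ > 0 with φ(t₀) = z and φ'(t₀) = φ'(0) (i.e., the trajectory t ↦ φ(t) is a closed curve) if and only if k/√(−4A² + 4Bk + k²) is rational. -/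
open Complex Metric Real Set

/-! Solutions of a Riccati equation `ψ' = aψ² + bψ + c` are Möbius functions of `exp (μ t)` with
`μ² = b² - 4ac`, so a nonconstant one returns to its starting point exactly when `exp (μ t) = 1`.
Here the Riccati equation is that of a one-parameter group of disk automorphisms, with generator
`a - iβw - conj a * w²`, for which `μ = iω` with `ω² = β² - 4|a|²`. If the rotated trajectory
`e^{ikt} ψ(t)` returns to `z` at time `t` with the same velocity, then the rotation by `e^{ikt}`
commutes with the generator at `ψ(t)`; off the unit circle and for `a ≠ 0` this forces
`e^{ikt} = 1`, hence `ψ(t) = z`. So closedness means that `e^{iωt}` and `e^{ikt}` have a common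
period, i.e. that their frequencies are commensurable. -/

open scoped ComplexConjugate

theorem eq_zero_of_hasDerivWithinAt_mul_self {R : Type*} [NonUnitalNormedRing R] [NormedSpace ℝ R]
    {F h : ℝ → R} {s t : ℝ} (hst : s ≤ t) (hh : ContinuousOn h (Icc s t))
    (hF : ∀ x ∈ Icc s t, HasDerivWithinAt F (h x * F x) (Ici s) x) (hs : F s = 0) :
    F t = 0 := by
  obtain ⟨K, hK⟩ := isCompact_Icc.exists_bound_of_continuousOn hh
  refine eq_zero_of_abs_deriv_le_mul_abs_self_of_eq_zero_right (K := K)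
    (fun x hx => (hF x hx).continuousWithinAt.mono Icc_subset_Ici_self)
    (fun x hx => (hF x (Ico_subset_Icc_self hx)).mono (Ici_subset_Ici.2 hx.1)) hs
    (fun x hx => ?_) t (right_mem_Icc.2 hst)
  exact (norm_mul_le _ _).trans
    (mul_le_mul_of_nonneg_right (hK x (Ico_subset_Icc_self hx)) (norm_nonneg _))

theorem hasDerivAt_exp_const_mul_ofReal (μ : ℂ) (t : ℝ) :
    HasDerivAt (fun s : ℝ => Complex.exp (μ * s)) (Complex.exp (μ * t) * μ) t := by
  simpa using ((hasDerivAt_id (t : ℂ)).const_mul μ).cexp.comp_ofReal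

section Riccati

variable {a b c μ : ℂ} {ψ : ℝ → ℂ}

/-- The Möbius form of the solution, multiplied out because its denominator could a priori
vanish. -/
theorem riccati_mul_denom_eq (hμ : μ ^ 2 = discrim a b c)
    (hψ : ∀ t : ℝ, 0 ≤ t → HasDerivWithinAt ψ (a * ψ t ^ 2 + b * ψ t + c) (Ici 0) t)
    {t : ℝ} (ht : 0 ≤ t) :
    ψ t * (μ * (Complex.exp (μ * t) + 1) - (Complex.exp (μ * t) - 1) * (2 * a * ψ 0 + b)) =
      ψ 0 * μ * (Complex.exp (μ * t) + 1) + (Complex.exp (μ * t) - 1) * (b * ψ 0 + 2 * c) := by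
  set E : ℝ → ℂ := fun s => Complex.exp (μ * s) with hE
  set F : ℝ → ℂ := fun s =>
    ψ s * (μ * (E s + 1) - (E s - 1) * (2 * a * ψ 0 + b)) -
      (ψ 0 * μ * (E s + 1) + (E s - 1) * (b * ψ 0 + 2 * c)) with hF
  have hF_deriv : ∀ s ∈ Icc 0 t,
      HasDerivWithinAt F ((a * ψ s + b / 2 + μ / 2) * F s) (Ici 0) s := by
    intro s hs
    have hE_deriv := (hasDerivAt_exp_const_mul_ofReal μ s).hasDerivWithinAt (s := Ici 0)
    have hplus := hE_deriv.add_const 1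
    have hminus := hE_deriv.sub_const 1
    refine (((hψ s hs.1).mul ((hplus.const_mul μ).sub (hminus.mul_const _))).sub
      ((hplus.const_mul (ψ 0 * μ)).add (hminus.mul_const _))).congr_deriv ?_
    simp only [hF, hE, Pi.sub_apply, discrim] at hμ ⊢
    linear_combination (ψ s - ψ 0) * (Complex.exp (μ * s) - 1) / 2 * hμ
  have hψ_cont : ContinuousOn ψ (Icc 0 t) := fun s hs =>
    (hψ s hs.1).continuousWithinAt.mono Icc_subset_Ici_self
  exact sub_eq_zero.1 (eq_zero_of_hasDerivWithinAt_mul_self ht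
    (by fun_prop) hF_deriv (by simp [hF, hE]; ring))

theorem riccati_eq_initial_iff (hμ : μ ^ 2 = discrim a b c) (hμ0 : μ ≠ 0)
    (hψ : ∀ t : ℝ, 0 ≤ t → HasDerivWithinAt ψ (a * ψ t ^ 2 + b * ψ t + c) (Ici 0) t)
    (h0 : a * ψ 0 ^ 2 + b * ψ 0 + c ≠ 0) {t : ℝ} (ht : 0 ≤ t) :
    ψ t = ψ 0 ↔ Complex.exp (μ * t) = 1 := by
  have hmobius := riccati_mul_denom_eq hμ hψ ht
  constructor <;> intro h
  · rw [h] at hmobius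
    have hmul : (Complex.exp (μ * t) - 1) * (a * ψ 0 ^ 2 + b * ψ 0 + c) = 0 := by
      linear_combination (-1 / 2) * hmobius
    exact sub_eq_zero.1 ((mul_eq_zero.1 hmul).resolve_right h0)
  · rw [h] at hmobius
    apply mul_right_cancel₀ hμ0
    linear_combination (1 / 2) * hmobius

end Riccati

section Commensurable

theorem exp_I_mul_eq_one_iff (x t : ℝ) :
    Complex.exp (I * x * t) = 1 ↔ ∃ n : ℤ, x * t = n * (2 * π) := by
  rw [Complex.exp_eq_one_iff]
  refine exists_congr fun n => ?_
  have hrhs : (n : ℂ) * (2 * π * I) = I * ((n * (2 * π) : ℝ) : ℂ) := by push_cast; ring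
  rw [hrhs, mul_assoc, mul_right_inj' I_ne_zero, ← ofReal_mul, ofReal_inj]

theorem exists_pos_exp_eq_one_and_exp_eq_one_iff {ω : ℝ} (hω : 0 < ω) (k : ℝ) :
    (∃ t : ℝ, 0 < t ∧ Complex.exp (I * ω * t) = 1 ∧ Complex.exp (I * k * t) = 1) ↔
      ∃ q : ℚ, (q : ℝ) = k / ω := by
  simp only [exp_I_mul_eq_one_iff]
  constructor
  · rintro ⟨t, ht, ⟨m, hm⟩, n, hn⟩
    refine ⟨n / m, ?_⟩
    push_cast
    rw [← mul_div_mul_right (n : ℝ) m Real.two_pi_pos.ne', ← hm, ← hn,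
      mul_div_mul_right _ _ ht.ne']
  · rintro ⟨q, hq⟩
    refine ⟨q.den * (2 * π) / ω, by have := q.pos; positivity, ⟨q.den, ?_⟩, q.num, ?_⟩
    · rw [Int.cast_natCast, mul_div_cancel₀ _ hω.ne']
    · have hnum : (q : ℝ) * q.den = q.num := by exact_mod_cast q.mul_den_eq_num
      calc k * (q.den * (2 * π) / ω) = k / ω * q.den * (2 * π) := by ring
        _ = q.num * (2 * π) := by rw [← hq, hnum]

theorem exists_rat_eq_div_of_sq_eq_sq {ω k : ℝ} (hω : ω ≠ 0) (h : k ^ 2 = ω ^ 2) :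
    ∃ q : ℚ, (q : ℝ) = k / ω := by
  rcases sq_eq_sq_iff_eq_or_eq_neg.1 h with rfl | rfl
  · exact ⟨1, by simp [hω]⟩
  · exact ⟨-1, by simp [hω]⟩

end Commensurable

section DiskField

/-- The infinitesimal generator `w ↦ a - iβw - conj a * w²` of a one-parameter group of
automorphisms of the unit disk; every such generator has this form. -/
noncomputable def diskField (a : ℂ) (β : ℝ) (w : ℂ) : ℂ :=
  a - I * β * w - conj a * w ^ 2

/-- `φ` has at time `t` the same position and velocity as at time `0`. The velocity is one-sided
at `0` because trajectories are only followed forward in time. -/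
def ReturnsAt (φ : ℝ → ℂ) (t : ℝ) : Prop :=
  φ t = φ 0 ∧ derivWithin φ (Ici 0) t = derivWithin φ (Ici 0) 0

theorem norm_exp_I_mul_ofReal_mul_ofReal (k t : ℝ) : ‖Complex.exp (I * k * t)‖ = 1 := by
  rw [mul_assoc, ← ofReal_mul, norm_exp_I_mul_ofReal]

variable {a : ℂ} {β k ω : ℝ} {ψ : ℝ → ℂ}

theorem mul_diskField_eq_diskField_mul_iff (ha : a ≠ 0) {e w : ℂ} (he : ‖e‖ = 1) (hw : ‖w‖ ≠ 1) :
    e * diskField a β w = diskField a β (e * w) ↔ e = 1 := by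
  have hfactor : e * diskField a β w - diskField a β (e * w) =
      (e - 1) * (a + conj a * (e * w ^ 2)) := by
    simp only [diskField]; ring
  have hne : a + conj a * (e * w ^ 2) ≠ 0 := by
    intro h
    have hnorm : ‖a‖ = ‖a‖ * ‖w‖ ^ 2 := by
      simpa [he] using congrArg norm (eq_neg_of_add_eq_zero_left h)
    have hsq : ‖w‖ ^ 2 = 1 := by
      simpa [norm_ne_zero_iff.2 ha] using hnorm
    exact hw ((pow_eq_one_iff_of_nonneg (norm_nonneg w) two_ne_zero).1 hsq)
  rw [← sub_eq_zero, hfactor, mul_eq_zero, or_iff_left hne, sub_eq_zero]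

theorem diskField_solution_eq_initial_iff (hω : ω ≠ 0) (hω_sq : ω ^ 2 = β ^ 2 - 4 * ‖a‖ ^ 2)
    (hψ : ∀ t : ℝ, 0 ≤ t → HasDerivWithinAt ψ (diskField a β (ψ t)) (Ici 0) t)
    (h0 : diskField a β (ψ 0) ≠ 0) {t : ℝ} (ht : 0 ≤ t) :
    ψ t = ψ 0 ↔ Complex.exp (I * ω * t) = 1 := by
  have hquad : ∀ w, diskField a β w = -conj a * w ^ 2 + -(I * β) * w + a := by
    intro w; simp only [diskField]; ring
  have hdiscrim : (I * ω) ^ 2 = discrim (-conj a) (-(I * β)) a := by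
    have hω_sq' : (ω : ℂ) ^ 2 = β ^ 2 - 4 * (conj a * a) := by
      rw [conj_mul']; exact_mod_cast hω_sq
    rw [discrim]
    linear_combination I ^ 2 * hω_sq' - 4 * (conj a * a) * I_sq
  simp only [hquad] at hψ h0
  exact riccati_eq_initial_iff hdiscrim (mul_ne_zero I_ne_zero (ofReal_ne_zero.2 hω)) hψ h0 ht

theorem derivWithin_exp_mul {v : ℂ} {t : ℝ} (ht : 0 ≤ t)
    (hψ : HasDerivWithinAt ψ v (Ici 0) t) :
    derivWithin (fun s : ℝ => Complex.exp (I * k * s) * ψ s) (Ici 0) t =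
      I * k * (Complex.exp (I * k * t) * ψ t) + Complex.exp (I * k * t) * v := by
  have h := (hasDerivAt_exp_const_mul_ofReal (I * k) t).hasDerivWithinAt.mul hψ
  exact (h.derivWithin (uniqueDiffOn_Ici 0 t ht)).trans (by ring)

theorem returnsAt_exp_mul_iff {v₀ v : ℂ} {t : ℝ} (ht : 0 ≤ t)
    (hψ₀ : HasDerivWithinAt ψ v₀ (Ici 0) 0) (hψ : HasDerivWithinAt ψ v (Ici 0) t) :
    ReturnsAt (fun s : ℝ => Complex.exp (I * k * s) * ψ s) t ↔
      Complex.exp (I * k * t) * ψ t = ψ 0 ∧ Complex.exp (I * k * t) * v = v₀ := by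
  rw [ReturnsAt, derivWithin_exp_mul ht hψ, derivWithin_exp_mul le_rfl hψ₀]
  simp only [ofReal_zero, mul_zero, Complex.exp_zero, one_mul]
  exact and_congr_right fun h => by rw [h, add_right_inj]

theorem exp_eq_one_of_returnsAt {t : ℝ} (ht : 0 ≤ t) (ha : a ≠ 0) (hcircle : ‖ψ 0‖ ≠ 1)
    (hψ₀ : HasDerivWithinAt ψ (diskField a β (ψ 0)) (Ici 0) 0)
    (hψ : HasDerivWithinAt ψ (diskField a β (ψ t)) (Ici 0) t)
    (hret : ReturnsAt (fun s : ℝ => Complex.exp (I * k * s) * ψ s) t) :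
    Complex.exp (I * k * t) = 1 := by
  obtain ⟨hpos, hvel⟩ := (returnsAt_exp_mul_iff ht hψ₀ hψ).1 hret
  have hnorm := norm_exp_I_mul_ofReal_mul_ofReal k t
  have hψt : ‖ψ t‖ ≠ 1 := by simpa [← hpos, hnorm] using hcircle
  exact (mul_diskField_eq_diskField_mul_iff ha hnorm hψt).1 (by rw [hvel, hpos])

end DiskField

theorem exists_pos_returnsAt_iff {a : ℂ} {β k ω : ℝ} {ψ : ℝ → ℂ} (hω : 0 < ω)
    (hω_sq : ω ^ 2 = β ^ 2 - 4 * ‖a‖ ^ 2) (hβ : a = 0 → β = k)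
    (hψ : ∀ t : ℝ, 0 ≤ t → HasDerivWithinAt ψ (diskField a β (ψ t)) (Ici 0) t)
    (h0 : diskField a β (ψ 0) ≠ 0) (hcircle : ‖ψ 0‖ ≠ 1) :
    (∃ t : ℝ, 0 < t ∧ ReturnsAt (fun s : ℝ => Complex.exp (I * k * s) * ψ s) t) ↔
      ∃ q : ℚ, (q : ℝ) = k / ω := by
  constructor
  · rintro ⟨t, ht, hret⟩
    by_cases ha : a = 0
    · exact exists_rat_eq_div_of_sq_eq_sq hω.ne' (by simp [hω_sq, ha, hβ ha])
    · have hexp := exp_eq_one_of_returnsAt ht.le ha hcircle (hψ 0 le_rfl) (hψ t ht.le) hret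
      have hψt : ψ t = ψ 0 := by simpa [hexp] using hret.1
      exact (exists_pos_exp_eq_one_and_exp_eq_one_iff hω k).1
        ⟨t, ht, (diskField_solution_eq_initial_iff hω.ne' hω_sq hψ h0 ht.le).1 hψt, hexp⟩
  · intro hq
    obtain ⟨t, ht, hωt, hkt⟩ := (exists_pos_exp_eq_one_and_exp_eq_one_iff hω k).2 hq
    have hψt := (diskField_solution_eq_initial_iff hω.ne' hω_sq hψ h0 ht.le).2 hωt
    exact ⟨t, ht, (returnsAt_exp_mul_iff ht.le (hψ 0 le_rfl) (hψ t ht.le)).2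
      (by simp [hkt, hψt])⟩

theorem elliptic_iff (A B k : ℝ) :
    4 * A ^ 2 - 4 * B * k - k ^ 2 < 0 ↔
      k < 2 * (-B - √(A ^ 2 + B ^ 2)) ∨ k > 2 * (-B + √(A ^ 2 + B ^ 2)) := by
  calc 4 * A ^ 2 - 4 * B * k - k ^ 2 < 0 ↔ A ^ 2 + B ^ 2 < (B + k / 2) ^ 2 := by
        constructor <;> intro h <;> linarith
    _ ↔ √(A ^ 2 + B ^ 2) < |B + k / 2| := by
        rw [← Real.sqrt_sq_eq_abs, Real.sqrt_lt_sqrt_iff (by positivity)]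
    _ ↔ _ := by
        rw [lt_abs, or_comm]
        apply or_congr <;> constructor <;> intro h <;> linarith

-- At `w = 1` the quotient on the left is `0` by convention; the factor `(w - 1) ^ 2` makes the
-- identity hold there too.
theorem herglotz_field_eq_diskField (A B k : ℝ) (w : ℂ) :
    (w - 1) ^ 2 * ((A : ℂ) * (1 + w) / (1 - w) + I * B) - I * k * w =
      diskField (A + I * B) (2 * B + k) w := by
  have hquot : (w - 1) ^ 2 * ((A : ℂ) * (1 + w) / (1 - w)) = A * (1 - w ^ 2) := by
    rcases eq_or_ne w 1 with rfl | hw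
    · simp
    · have hsub : 1 - w ≠ 0 := sub_ne_zero.2 hw.symm
      field_simp
      ring
  rw [mul_add, hquot]
  simp only [diskField, map_add, map_mul, conj_ofReal, conj_I]
  push_cast
  ring

theorem stmt_5_general (A B k : ℝ) (hD : 4 * A ^ 2 - 4 * B * k - k ^ 2 < 0)
    (g : ℂ → ℂ)
    (hg : ∀ w : ℂ, g w = (w - 1) ^ 2 * ((A : ℂ) * (1 + w) / (1 - w) + Complex.I * B)
      - Complex.I * k * w)
    (z : ℂ) (hz : ‖z‖ ≠ 1) (hznz : g z ≠ 0)
    (ψ : ℝ → ℂ) (hψ0 : ψ 0 = z)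
    (hψ : ∀ t : ℝ, 0 ≤ t → HasDerivWithinAt ψ (g (ψ t)) (Set.Ici 0) t)
    (φ : ℝ → ℂ) (hφ : ∀ t : ℝ, φ t = Complex.exp (Complex.I * k * t) * ψ t) :
    (∃ t₀ : ℝ, 0 < t₀ ∧ φ t₀ = z ∧
        derivWithin φ (Set.Ici 0) t₀ = derivWithin φ (Set.Ici 0) 0)
    ↔ ∃ q : ℚ, (q : ℝ) = k / Real.sqrt (-4 * A ^ 2 + 4 * B * k + k ^ 2) := by
  obtain rfl : φ = fun t : ℝ => Complex.exp (I * k * t) * ψ t := funext hφ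
  obtain rfl : g = diskField (A + I * B) (2 * B + k) :=
    funext fun w => (hg w).trans (herglotz_field_eq_diskField A B k w)
  have hpos : 0 < -4 * A ^ 2 + 4 * B * k + k ^ 2 := by linarith
  have hnorm : ‖(A : ℂ) + I * B‖ ^ 2 = A ^ 2 + B ^ 2 := by
    rw [mul_comm, Complex.sq_norm, normSq_add_mul_I]
  have hβ : (A : ℂ) + I * B = 0 → 2 * B + k = k := fun h => by
    simpa using congrArg Complex.im h
  subst hψ0
  rw [← exists_pos_returnsAt_iff (Real.sqrt_pos.2 hpos)
    (by rw [Real.sq_sqrt hpos.le, hnorm]; ring) hβ hψ hznz hz]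
  simp only [ReturnsAt, ofReal_zero, mul_zero, Complex.exp_zero, one_mul]


/-- in the elliptic automorphism case, the trajectory
`φ(t) = e^{ikt} ψ(t)` through a non-equilibrium point `z` is closed (position and
velocity return simultaneously to their initial values at some `t₀ > 0`) if and
only if `k / √(-4A² + 4Bk + k²)` is rational. -/
theorem stmt_5 (A B k : ℝ) (hA : 0 ≤ A) (hk : k ≠ 0)
    (hell : k < 2 * (-B - Real.sqrt (A ^ 2 + B ^ 2)) ∨
            k > 2 * (-B + Real.sqrt (A ^ 2 + B ^ 2)))
    (g : ℂ → ℂ)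
    (hg : ∀ w : ℂ, g w = (w - 1) ^ 2 * ((A : ℂ) * (1 + w) / (1 - w) + Complex.I * B)
      - Complex.I * k * w)
    (z : ℂ) (hz : z ∈ ball (0 : ℂ) 1) (hznz : g z ≠ 0)
    (ψ : ℝ → ℂ) (hψ0 : ψ 0 = z)
    (hψball : ∀ t : ℝ, 0 ≤ t → ψ t ∈ ball (0 : ℂ) 1)
    (hψ : ∀ t : ℝ, 0 ≤ t → HasDerivWithinAt ψ (g (ψ t)) (Set.Ici 0) t)
    (φ : ℝ → ℂ) (hφ : ∀ t : ℝ, φ t = Complex.exp (Complex.I * k * t) * ψ t) :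
    (∃ t₀ : ℝ, 0 < t₀ ∧ φ t₀ = z ∧
        derivWithin φ (Set.Ici 0) t₀ = derivWithin φ (Set.Ici 0) 0)
    ↔ ∃ q : ℚ, (q : ℝ) = k / Real.sqrt (-4 * A ^ 2 + 4 * B * k + k ^ 2) := by
  exact stmt_5_general A B k ((elliptic_iff A B k).2 hell) g hg z (mem_ball_zero_iff.1 hz).ne hznz
    ψ hψ0 hψ φ hφ
end
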